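/- arXiv:1905.05630 — 2 statements merged into one kernel-verified Lean document; each statement's English description precedes it below -/
import Mathlib

section
/- For every X ∈ 𝒞, the series Σ_{g∈G} X_g* X_g converges unconditionally in the operator norm, with sum π(X*X); equivalently, for every ε > 0 there is a finite set L ⊆ G such that for every finite K ⊇ L, 0 ≤ π(X*X) − Σ_{g∈K} X_g* X_g ≤ ε²·I. This generalizes Plancherel's theorem. -/
set_option synthInstance.maxHeartbeats 1000000
set_option maxHeartbeats 1000000

open scoped InnerProductSpace
open ContinuousLinearMap

noncomputable section

/-- `l2 G H` is the Hilbert space `ℓ²(G,H)` of square-summable `H`-valued functions on `G`. -/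
abbrev l2 (G : Type) (H : Type) [NormedAddCommGroup H] : Type := lp (fun _ : G => H) 2


section helpers

variable {H : Type} [NormedAddCommGroup H] [InnerProductSpace ℂ H] [CompleteSpace H]
variable {G : Type} [Group G] [DecidableEq G]

lemma aux_sq (f : l2 G H) (s : Finset G) :
    ‖f‖ ^ 2 - ∑ i ∈ s, ‖f i‖ ^ 2 = ‖f - ∑ i ∈ s, lp.single 2 i (f i)‖ ^ 2 := by
  have h := lp.norm_compl_sum_single (p := 2) (by norm_num) f s
  simp only [ENNReal.toReal_ofNat, Real.rpow_ofNat] at h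
  linarith

lemma aux_le (y z : l2 G H) (s : Finset G) (hw : ∀ k ∉ s, (y - z) k = 0) :
    ‖y‖ ^ 2 - ∑ i ∈ s, ‖y i‖ ^ 2 ≤ ‖z‖ ^ 2 := by
  have e : y - ∑ i ∈ s, lp.single 2 i (y i) = z - ∑ i ∈ s, lp.single 2 i (z i) := by
    ext k
    have := hw k
    simp only [lp.coeFn_sub, Pi.sub_apply, lp.coeFn_sum, Finset.sum_apply, lp.single_apply,
      Finset.sum_pi_single] at *
    by_cases hk : k ∈ s
    · simp [hk]
    · simpa [hk, sub_eq_zero] using this hk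
  rw [aux_sq, e, ← aux_sq]
  have : 0 ≤ ∑ i ∈ s, ‖z i‖ ^ 2 := Finset.sum_nonneg fun _ _ => by positivity
  linarith

lemma aux_inner_single (f : l2 G H) (k : G) (w : H) :
    ⟪f, lp.single 2 k w⟫_ℂ = ⟪f k, w⟫_ℂ := lp.inner_single_right k w f

/-- finite propagation -/
def FinProp (X : l2 G H →L[ℂ] l2 G H) : Prop :=
  ∃ s : Finset G, ∀ (h : G) (v : H) (k : G), k * h⁻¹ ∉ s → (X (lp.single 2 h v) : ∀ _ : G, H) k = 0

lemma FinProp.add {X Y : l2 G H →L[ℂ] l2 G H} (hX : FinProp X) (hY : FinProp Y) :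
    FinProp (X + Y) := by
  obtain ⟨s, hs⟩ := hX
  obtain ⟨t, ht⟩ := hY
  refine ⟨s ∪ t, fun h v k hk => ?_⟩
  simp only [Finset.mem_union, not_or] at hk
  simp [hs h v k hk.1, ht h v k hk.2]

lemma FinProp.mul {X Y : l2 G H →L[ℂ] l2 G H} (hX : FinProp X) (hY : FinProp Y) :
    FinProp (X * Y) := by
  obtain ⟨s, hs⟩ := hX
  obtain ⟨t, ht⟩ := hY
  refine ⟨(s ×ˢ t).image fun p => p.1 * p.2, fun h v k hk => ?_⟩
  set f := Y (lp.single 2 h v) with hf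
  have e : f = ∑ l ∈ t, lp.single 2 (l * h) (f (l * h)) := by
    ext k
    by_cases hk : k * h⁻¹ ∈ t
    · rw [lp.coeFn_sum, Finset.sum_apply, Finset.sum_eq_single_of_mem _ hk]
      · simp
      · intro b _ hb
        rw [lp.single_apply, Pi.single_eq_of_ne]
        rintro rfl
        simp at hb
    · rw [lp.coeFn_sum, Finset.sum_apply, Finset.sum_eq_zero]
      · exact ht h v k hk
      · intro b hb'
        rw [lp.single_apply, Pi.single_eq_of_ne]
        rintro rfl
        simp [hb'] at hk
  change (X f : ∀ _ : G, H) k = 0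
  rw [e, map_sum, lp.coeFn_sum, Finset.sum_apply]
  refine Finset.sum_eq_zero fun l hl => hs _ _ _ fun hc => hk ?_
  exact Finset.mem_image.2 ⟨(k * (l * h)⁻¹, l), Finset.mem_product.2 ⟨hc, hl⟩, by group⟩

lemma FinProp.star {X : l2 G H →L[ℂ] l2 G H} (hX : FinProp X) : FinProp (star X) := by
  obtain ⟨s, hs⟩ := hX
  refine ⟨s.image fun g => g⁻¹, fun h v k hk => ?_⟩
  rw [← inner_self_eq_zero (𝕜 := ℂ), ← aux_inner_single, star_eq_adjoint, adjoint_inner_left,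
    ← inner_conj_symm, aux_inner_single, hs]
  · simp
  · intro hc
    exact hk (Finset.mem_image.2 ⟨_, hc, by group⟩)

lemma FinProp.diag {X : l2 G H →L[ℂ] l2 G H} (a : G)
    (hX : ∀ (ξ : l2 G H) (k : G), ξ (a⁻¹ * k) = 0 → (X ξ : ∀ _ : G, H) k = 0) : FinProp X := by
  refine ⟨{a}, fun h v k hk => hX _ _ ?_⟩
  rw [lp.single_apply, Pi.single_eq_of_ne]
  rintro rfl
  simp at hk

lemma pi_apply (π : (l2 G H →L[ℂ] l2 G H) → (l2 G H →L[ℂ] l2 G H))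
    (hπ : ∀ (X : l2 G H →L[ℂ] l2 G H) (ξ η : l2 G H), ⟪π X ξ, η⟫_ℂ =
      ∑' g : G, ⟪X (lp.single 2 g ((ξ : ∀ _ : G, H) g)),
        lp.single 2 g ((η : ∀ _ : G, H) g)⟫_ℂ)
    (X : l2 G H →L[ℂ] l2 G H) (ξ : l2 G H) (h : G) :
    (π X ξ : ∀ _ : G, H) h = (X (lp.single 2 h (ξ h)) : ∀ _ : G, H) h := by
  refine ext_inner_right ℂ fun v => ?_
  rw [← aux_inner_single, hπ, tsum_eq_single h]
  · rw [aux_inner_single]; simp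
  · intro b hb
    rw [aux_inner_single]; simp [hb]

lemma star_L_apply (L : G → (l2 G H →L[ℂ] l2 G H))
    (hL : ∀ (g : G) (ξ : l2 G H) (h : G),
      (L g ξ : ∀ _ : G, H) h = (ξ : ∀ _ : G, H) (g⁻¹ * h)) (g : G) (ξ : l2 G H) (h : G) :
    (star (L g) ξ : ∀ _ : G, H) h = ξ (g * h) := by
  refine ext_inner_right ℂ fun v => ?_
  have e : L g (lp.single 2 h v) = lp.single 2 (g * h) v := by
    ext k
    rw [hL]
    simp only [lp.single_apply, Pi.single_apply]
    congr 1
    rw [inv_mul_eq_iff_eq_mul]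
  rw [← aux_inner_single, star_eq_adjoint, adjoint_inner_left, e, aux_inner_single]

lemma l2_hasSum (f : l2 G H) : HasSum (fun h => ‖f h‖ ^ 2) (‖f‖ ^ 2) := by
  have := lp.hasSum_norm (p := 2) (by norm_num) f
  simpa using this

lemma aux_self (X : l2 G H →L[ℂ] l2 G H) (ξ : l2 G H) :
    ⟪(star X * X) ξ, ξ⟫_ℂ = (‖X ξ‖ : ℂ) ^ 2 := by
  change ⟪(adjoint X) (X ξ), ξ⟫_ℂ = _
  rw [adjoint_inner_left, inner_self_eq_norm_sq_to_K]
  rfl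

lemma quad (L : G → (l2 G H →L[ℂ] l2 G H))
    (hL : ∀ (g : G) (ξ : l2 G H) (h : G),
      (L g ξ : ∀ _ : G, H) h = (ξ : ∀ _ : G, H) (g⁻¹ * h))
    (π : (l2 G H →L[ℂ] l2 G H) → (l2 G H →L[ℂ] l2 G H))
    (hπ : ∀ (X : l2 G H →L[ℂ] l2 G H) (ξ η : l2 G H), ⟪π X ξ, η⟫_ℂ =
      ∑' g : G, ⟪X (lp.single 2 g ((ξ : ∀ _ : G, H) g)),
        lp.single 2 g ((η : ∀ _ : G, H) g)⟫_ℂ)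
    (X : l2 G H →L[ℂ] l2 G H) (t : Finset G) (ξ : l2 G H) :
    ∃ r : ℝ, ⟪(π (star X * X) - ∑ g ∈ t, star (π (star (L g) * X)) * π (star (L g) * X)) ξ, ξ⟫_ℂ
      = r ∧ HasSum (fun h => ‖X (lp.single 2 h (ξ h))‖ ^ 2 -
        ∑ g ∈ t, ‖(X (lp.single 2 h (ξ h)) : ∀ _ : G, H) (g * h)‖ ^ 2) r := by
  have s1 : Summable fun h => ‖X (lp.single 2 h (ξ h))‖ ^ 2 := by
    refine Summable.of_nonneg_of_le (fun _ => by positivity) (fun h => ?_)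
      ((l2_hasSum ξ).summable.mul_left (‖X‖ ^ 2))
    rw [← mul_pow]
    gcongr
    refine (X.le_opNorm _).trans ?_
    rw [lp.norm_single (by norm_num)]
  have s2 : ∀ g ∈ t, HasSum (fun h => ‖(X (lp.single 2 h (ξ h)) : ∀ _ : G, H) (g * h)‖ ^ 2)
      (‖π (star (L g) * X) ξ‖ ^ 2) := by
    intro g _
    convert l2_hasSum (π (star (L g) * X) ξ) using 4 with h
    rw [pi_apply π hπ, ← star_L_apply L hL]
    rfl
  refine ⟨_, ?_, s1.hasSum.sub (hasSum_sum s2)⟩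
  rw [sub_apply, inner_sub_left, hπ, _root_.sum_apply, sum_inner]
  push_cast
  congr 1
  · congr 1
    ext h
    exact aux_self X _
  · refine Finset.sum_congr rfl fun g _ => ?_
    exact aux_self _ _

end helpers

theorem hadamard_stmt3
    {H : Type} [NormedAddCommGroup H] [InnerProductSpace ℂ H] [CompleteSpace H]
    {G : Type} [Group G] [DecidableEq G]
    (𝒜 : StarSubalgebra ℂ (H →L[ℂ] H))
    (h𝒜 : IsClosed (𝒜 : Set (H →L[ℂ] H)))
    (hnd : Dense (↑(Submodule.span ℂ {v : H | ∃ A ∈ 𝒜, ∃ w : H, v = A w}) : Set H))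
    (α : G → (𝒜 ≃⋆ₐ[ℂ] 𝒜))
    (hα1 : ∀ A, α 1 A = A)
    (hαmul : ∀ g h A, α (g * h) A = α g (α h A))
    (Ψ : 𝒜 → (l2 G H →L[ℂ] l2 G H))
    (hΨ : ∀ (A : 𝒜) (ξ : l2 G H) (g : G),
      (Ψ A ξ : ∀ _ : G, H) g = ((α g⁻¹ A : 𝒜) : H →L[ℂ] H) ((ξ : ∀ _ : G, H) g))
    (L : G → (l2 G H →L[ℂ] l2 G H))
    (hL : ∀ (g : G) (ξ : l2 G H) (h : G),
      (L g ξ : ∀ _ : G, H) h = (ξ : ∀ _ : G, H) (g⁻¹ * h))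
    (𝒞 : Set (l2 G H →L[ℂ] l2 G H))
    (h𝒞 : 𝒞 = ((StarAlgebra.adjoin ℂ
        (Set.range Ψ ∪ Set.range L)).topologicalClosure : Set _))
    (π : (l2 G H →L[ℂ] l2 G H) → (l2 G H →L[ℂ] l2 G H))
    (hπ : ∀ (X : l2 G H →L[ℂ] l2 G H) (ξ η : l2 G H), ⟪π X ξ, η⟫_ℂ =
      ∑' g : G, ⟪X (lp.single 2 g ((ξ : ∀ _ : G, H) g)),
        lp.single 2 g ((η : ∀ _ : G, H) g)⟫_ℂ)
    :
    ∀ X ∈ 𝒞,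
      HasSum (fun g : G => star (π (star (L g) * X)) * π (star (L g) * X))
        (π (star X * X)) ∧
      (∀ ε : ℝ, 0 < ε → ∃ s : Finset G, ∀ t : Finset G, s ⊆ t →
        (0 : l2 G H →L[ℂ] l2 G H)
            ≤ π (star X * X) - ∑ g ∈ t, star (π (star (L g) * X)) * π (star (L g) * X) ∧
        π (star X * X) - ∑ g ∈ t, star (π (star (L g) * X)) * π (star (L g) * X)
            ≤ ε ^ 2 • (1 : l2 G H →L[ℂ] l2 G H)) := by
  intro X hX
  have hfin : ∀ Y ∈ StarAlgebra.adjoin ℂ (Set.range Ψ ∪ Set.range L), FinProp Y := by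
    intro Y hY
    induction hY using StarAlgebra.adjoin_induction with
    | mem x hx =>
      rcases hx with ⟨A, rfl⟩ | ⟨g, rfl⟩
      · refine FinProp.diag 1 fun ξ k hk => ?_
        rw [hΨ]
        simp at hk
        simp [hk]
      · refine FinProp.diag g fun ξ k hk => ?_
        rw [hL, hk]
    | algebraMap r =>
      refine FinProp.diag 1 fun ξ k hk => ?_
      simp at hk
      simp [Algebra.algebraMap_eq_smul_one, hk]
    | add x y _ _ hx hy => exact hx.add hy
    | mul x y _ _ hx hy => exact hx.mul hy
    | star x _ hx => exact hx.star
  have key : ∀ ε : ℝ, 0 < ε → ∃ s : Finset G, ∀ t : Finset G, s ⊆ t →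
        (0 : l2 G H →L[ℂ] l2 G H)
            ≤ π (star X * X) - ∑ g ∈ t, star (π (star (L g) * X)) * π (star (L g) * X) ∧
        π (star X * X) - ∑ g ∈ t, star (π (star (L g) * X)) * π (star (L g) * X)
            ≤ ε ^ 2 • (1 : l2 G H →L[ℂ] l2 G H) := by
    intro ε hε
    have hX' : X ∈ closure ((StarAlgebra.adjoin ℂ (Set.range Ψ ∪ Set.range L) :
        StarSubalgebra ℂ (l2 G H →L[ℂ] l2 G H)) : Set (l2 G H →L[ℂ] l2 G H)) := by
      rw [h𝒞] at hX
      exact hX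
    obtain ⟨Y, hY, hXY⟩ := Metric.mem_closure_iff.1 hX' ε hε
    obtain ⟨s, hs⟩ := hfin Y hY
    rw [dist_eq_norm] at hXY
    refine ⟨s, fun t hst => ?_⟩
    have re_sum : ∀ (f : l2 G H) (h : G), ∑ g ∈ t, ‖f (g * h)‖ ^ 2
        = ∑ i ∈ t.map (mulRightEmbedding h), ‖f i‖ ^ 2 := by
      intro f h
      rw [Finset.sum_map]
      rfl
    constructor
    · rw [ContinuousLinearMap.nonneg_iff_isPositive, ContinuousLinearMap.isPositive_iff_complex]
      intro ξ
      obtain ⟨r, hr, hsum⟩ := quad L hL π hπ X t ξ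
      rw [hr]
      refine ⟨by simp, ?_⟩
      change 0 ≤ r
      refine hsum.nonneg fun h => ?_
      rw [re_sum, aux_sq]
      positivity
    · rw [ContinuousLinearMap.le_def, ContinuousLinearMap.isPositive_iff_complex]
      intro ξ
      obtain ⟨r, hr, hsum⟩ := quad L hL π hπ X t ξ
      have e2 : ⟪(ε ^ 2 • (1 : l2 G H →L[ℂ] l2 G H)) ξ, ξ⟫_ℂ = ((ε ^ 2 * ‖ξ‖ ^ 2 : ℝ) : ℂ) := by
        change ⟪ε ^ 2 • ξ, ξ⟫_ℂ = _
        have e3 : ε ^ 2 • ξ = ((ε ^ 2 : ℝ) : ℂ) • ξ := by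
          ext k
          rw [lp.coeFn_smul, lp.coeFn_smul, Pi.smul_apply, Pi.smul_apply]
          exact (Complex.coe_smul (ε ^ 2) (ξ k)).symm
        rw [e3, inner_smul_left, inner_self_eq_norm_sq_to_K]
        simp
      rw [sub_apply, inner_sub_left, hr, e2, ← Complex.ofReal_sub]
      refine ⟨rfl, ?_⟩
      change 0 ≤ ε ^ 2 * ‖ξ‖ ^ 2 - r
      rw [sub_nonneg]
      refine hasSum_le (fun h => ?_) hsum ((l2_hasSum ξ).mul_left (ε ^ 2))
      rw [re_sum]
      refine (aux_le _ ((X - Y) (lp.single 2 h (ξ h))) _ ?_).trans ?_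
      · intro k hk
        have : X (lp.single 2 h (ξ h)) - (X - Y) (lp.single 2 h (ξ h))
          = Y (lp.single 2 h (ξ h)) := by simp
        rw [this]
        refine hs _ _ _ fun hc => hk ?_
        exact Finset.mem_map.2 ⟨_, hst hc, by simp [mulRightEmbedding]⟩
      · rw [← mul_pow]
        gcongr
        refine ((X - Y).le_opNorm _).trans ?_
        rw [lp.norm_single (by norm_num)]
        gcongr
  refine ⟨?_, key⟩
  rw [HasSum, SummationFilter.unconditional_filter, Metric.tendsto_atTop]
  intro ε hε
  obtain ⟨s, hs⟩ := key (Real.sqrt (ε / 2)) (by positivity)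
  refine ⟨s, fun t hst => ?_⟩
  obtain ⟨h0, h1⟩ := hs t hst
  rw [Real.sq_sqrt (by positivity)] at h1
  rw [dist_comm, dist_eq_norm]
  have := (CStarAlgebra.norm_le_iff_le_algebraMap _ (by positivity : 0 ≤ ε / 2) h0).2
    (by rwa [Algebra.algebraMap_eq_smul_one])
  linarith
end
end

section
/- Let X ∈ 𝒞 and let K ⊆ G be a finite subset. Then the tail X̂ := X − Σ_{g∈K} L_g X_g satisfies ‖X̂‖_π = ‖π(X*X) − Σ_{g∈K} X_g* X_g‖^{1/2} = inf{ ‖X − Y‖_π : Y ∈ span{ L_k Ψ(A) : k ∈ K, A ∈ 𝒜 } }. (Nearest point / best approximation formula.) -/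
set_option synthInstance.maxHeartbeats 1000000
set_option maxHeartbeats 1000000

open scoped InnerProductSpace
open ContinuousLinearMap

noncomputable section

lemma hs4_sub_sum_sq {H : Type} [NormedAddCommGroup H] {G : Type} [Group G] [DecidableEq G]
    (f : l2 G H) (K : Finset G) (g : G) :
    ‖f - ∑ k ∈ K, lp.single 2 (k * g) ((f : ∀ _ : G, H) (k * g))‖ ^ 2 =
      ‖f‖ ^ 2 - ∑ k ∈ K, ‖(f : ∀ _ : G, H) (k * g)‖ ^ 2 := by
  have h := lp.norm_compl_sum_single (p := 2) (by norm_num) f (K.image (· * g))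
  rw [Finset.sum_image (by intro a _ b _ h; simpa using h),
    Finset.sum_image (by intro a _ b _ h; simpa using h)] at h
  simpa using h

lemma hs4_le {H : Type} [NormedAddCommGroup H] {G : Type} [Group G] [DecidableEq G]
    (f y : l2 G H) (K : Finset G) (g : G)
    (hy : ∀ h, (∀ k ∈ K, h ≠ k * g) → (y : ∀ _ : G, H) h = 0) :
    ‖f - ∑ k ∈ K, lp.single 2 (k * g) ((f : ∀ _ : G, H) (k * g))‖ ^ 2 ≤ ‖f - y‖ ^ 2 := by
  have h1 := hs4_sub_sum_sq (f - y) K g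
  have e : f - ∑ k ∈ K, lp.single 2 (k * g) ((f : ∀ _ : G, H) (k * g)) =
      (f - y) - ∑ k ∈ K, lp.single 2 (k * g) (((f - y : l2 G H) : ∀ _ : G, H) (k * g)) := by
    have : y = ∑ k ∈ K, lp.single 2 (k * g) ((y : ∀ _ : G, H) (k * g)) := by
      ext h
      rw [lp.coeFn_sum, Finset.sum_apply]
      by_cases hh : ∃ k ∈ K, h = k * g
      · obtain ⟨k, hk, rfl⟩ := hh
        rw [Finset.sum_eq_single k]
        · rw [lp.single_apply_self]
        · intro b _ hb
          exact lp.single_apply_ne _ _ _ (by simpa using hb.symm)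
        · exact fun h => absurd hk h
      · push Not at hh
        rw [hy h hh, Finset.sum_eq_zero]
        intro k hk
        exact lp.single_apply_ne _ _ _ (hh k hk)
    simp only [lp.coeFn_sub, Pi.sub_apply, lp.single_sub, Finset.sum_sub_distrib]
    rw [← this]; abel
  rw [e, h1]
  have : 0 ≤ ∑ k ∈ K, ‖((f - y : l2 G H) : ∀ _ : G, H) (k * g)‖ ^ 2 :=
    Finset.sum_nonneg fun _ _ => sq_nonneg _
  linarith

lemma hs4_hasSum_sq {H : Type} [NormedAddCommGroup H] {G : Type} (f : l2 G H) :
    HasSum (fun g => ‖(f : ∀ _ : G, H) g‖ ^ 2) (‖f‖ ^ 2) := by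
  simpa using lp.hasSum_norm (p := 2) (by norm_num) f

lemma hs4_col {H : Type} [NormedAddCommGroup H] [InnerProductSpace ℂ H] {G : Type} [DecidableEq G]
    (Z : l2 G H →L[ℂ] l2 G H) (ξ : l2 G H) :
    Summable (fun g => ‖Z (lp.single 2 g ((ξ : ∀ _ : G, H) g))‖ ^ 2) := by
  refine Summable.of_nonneg_of_le (fun _ => sq_nonneg _) (fun g => ?_)
    ((hs4_hasSum_sq ξ).summable.mul_left (‖Z‖ ^ 2))
  rw [← mul_pow]
  gcongr
  exact (Z.le_opNorm _).trans (by rw [lp.norm_single (by norm_num)])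

theorem hadamard_stmt4
    {H : Type} [NormedAddCommGroup H] [InnerProductSpace ℂ H] [CompleteSpace H]
    {G : Type} [Group G] [DecidableEq G]
    (𝒜 : StarSubalgebra ℂ (H →L[ℂ] H))
    (h𝒜 : IsClosed (𝒜 : Set (H →L[ℂ] H)))
    (hnd : Dense (↑(Submodule.span ℂ {v : H | ∃ A ∈ 𝒜, ∃ w : H, v = A w}) : Set H))
    (α : G → (𝒜 ≃⋆ₐ[ℂ] 𝒜))
    (hα1 : ∀ A, α 1 A = A)
    (hαmul : ∀ g h A, α (g * h) A = α g (α h A))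
    (Ψ : 𝒜 → (l2 G H →L[ℂ] l2 G H))
    (hΨ : ∀ (A : 𝒜) (ξ : l2 G H) (g : G),
      (Ψ A ξ : ∀ _ : G, H) g = ((α g⁻¹ A : 𝒜) : H →L[ℂ] H) ((ξ : ∀ _ : G, H) g))
    (L : G → (l2 G H →L[ℂ] l2 G H))
    (hL : ∀ (g : G) (ξ : l2 G H) (h : G),
      (L g ξ : ∀ _ : G, H) h = (ξ : ∀ _ : G, H) (g⁻¹ * h))
    (𝒞 : Set (l2 G H →L[ℂ] l2 G H))
    (h𝒞 : 𝒞 = ((StarAlgebra.adjoin ℂ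
        (Set.range Ψ ∪ Set.range L)).topologicalClosure : Set _))
    (π : (l2 G H →L[ℂ] l2 G H) → (l2 G H →L[ℂ] l2 G H))
    (hπ : ∀ (X : l2 G H →L[ℂ] l2 G H) (ξ η : l2 G H), ⟪π X ξ, η⟫_ℂ =
      ∑' g : G, ⟪X (lp.single 2 g ((ξ : ∀ _ : G, H) g)),
        lp.single 2 g ((η : ∀ _ : G, H) g)⟫_ℂ)
    :
    ∀ X ∈ 𝒞, ∀ K : Finset G,
      Real.sqrt ‖π (star (X - ∑ g ∈ K, L g * π (star (L g) * X))
          * (X - ∑ g ∈ K, L g * π (star (L g) * X)))‖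
        = Real.sqrt ‖π (star X * X)
            - ∑ g ∈ K, star (π (star (L g) * X)) * π (star (L g) * X)‖ ∧
      Real.sqrt ‖π (star X * X)
            - ∑ g ∈ K, star (π (star (L g) * X)) * π (star (L g) * X)‖
        = sInf ((fun Y => Real.sqrt ‖π (star (X - Y) * (X - Y))‖) ''
            ((Submodule.span ℂ
              {Z : l2 G H →L[ℂ] l2 G H | ∃ k ∈ K, ∃ A : 𝒜, Z = L k * Ψ A}
              : Submodule ℂ (l2 G H →L[ℂ] l2 G H)) : Set (l2 G H →L[ℂ] l2 G H))) := by
  -- basic facts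
  have hπa : ∀ (Z : l2 G H →L[ℂ] l2 G H) (ξ : l2 G H) (g : G),
      (π Z ξ : ∀ _ : G, H) g = (Z (lp.single 2 g ((ξ : ∀ _ : G, H) g)) : ∀ _ : G, H) g := by
    intro Z ξ g
    refine ext_inner_right ℂ fun v => ?_
    rw [← lp.inner_single_right, hπ, tsum_eq_single g]
    · rw [lp.single_apply_self, lp.inner_single_right]
    · intro b hb
      rw [lp.single_apply_ne _ _ _ hb]; simp
  have hLs : ∀ g, star (L g) = L g⁻¹ := by
    intro g
    rw [ContinuousLinearMap.star_eq_adjoint]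
    symm
    rw [ContinuousLinearMap.eq_adjoint_iff]
    intro x y
    rw [lp.inner_eq_tsum, lp.inner_eq_tsum]
    simp only [hL, inv_inv]
    rw [← (Equiv.mulLeft g).tsum_eq (fun i => ⟪(x : ∀ _ : G, H) i, (y : ∀ _ : G, H) (g⁻¹ * i)⟫_ℂ)]
    simp
  have hLsa : ∀ g (ξ : l2 G H) h, (star (L g) ξ : ∀ _ : G, H) h = (ξ : ∀ _ : G, H) (g * h) := by
    intro g ξ h
    rw [hLs, hL, inv_inv]
  have hΨs : ∀ A, star (Ψ A) = Ψ (star A) := by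
    intro A
    rw [ContinuousLinearMap.star_eq_adjoint]
    symm
    rw [ContinuousLinearMap.eq_adjoint_iff]
    intro x y
    rw [lp.inner_eq_tsum, lp.inner_eq_tsum]
    congr 1; ext g
    rw [hΨ, hΨ, map_star, StarMemClass.coe_star, ContinuousLinearMap.star_eq_adjoint,
      ContinuousLinearMap.adjoint_inner_left]
  -- Fourier coefficients
  have hc : ∀ (Z : l2 G H →L[ℂ] l2 G H) k (ξ : l2 G H) g,
      (π (star (L k) * Z) ξ : ∀ _ : G, H) g =
        (Z (lp.single 2 g ((ξ : ∀ _ : G, H) g)) : ∀ _ : G, H) (k * g) := by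
    intro Z k ξ g
    rw [hπa, ContinuousLinearMap.mul_apply, hLsa]
  have hcs : ∀ (Z : l2 G H →L[ℂ] l2 G H) k g v,
      (L k * π (star (L k) * Z)) (lp.single 2 g v) =
        lp.single 2 (k * g) ((Z (lp.single 2 g v) : ∀ _ : G, H) (k * g)) := by
    intro Z k g v
    ext h
    rw [ContinuousLinearMap.mul_apply, hL, hc]
    by_cases hh : h = k * g
    · subst hh
      simp
    · rw [lp.single_apply_ne _ _ _ hh, lp.single_apply_ne]
      · simp
      · rintro rfl; simp at hh
  have hq : ∀ (Z : l2 G H →L[ℂ] l2 G H) ξ, ⟪π (star Z * Z) ξ, ξ⟫_ℂ =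
      ((∑' g, ‖Z (lp.single 2 g ((ξ : ∀ _ : G, H) g))‖ ^ 2 : ℝ) : ℂ) := by
    intro Z ξ
    rw [hπ, Complex.ofReal_tsum]
    congr 1; ext g
    rw [ContinuousLinearMap.mul_apply, ContinuousLinearMap.star_eq_adjoint,
      ContinuousLinearMap.adjoint_inner_left, inner_self_eq_norm_sq_to_K]
    simp
  have hpos : ∀ Z : l2 G H →L[ℂ] l2 G H, 0 ≤ π (star Z * Z) := by
    intro Z
    rw [ContinuousLinearMap.nonneg_iff_isPositive, ContinuousLinearMap.isPositive_iff_complex]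
    intro ξ
    rw [hq]
    refine ⟨by simp, ?_⟩
    simp only [RCLike.re_to_complex, Complex.ofReal_re]
    exact tsum_nonneg fun _ => sq_nonneg _
  have hmono : ∀ Z W : l2 G H →L[ℂ] l2 G H,
      (∀ g v, ‖Z (lp.single 2 g v)‖ ^ 2 ≤ ‖W (lp.single 2 g v)‖ ^ 2) →
      ‖π (star Z * Z)‖ ≤ ‖π (star W * W)‖ := by
    intro Z W h
    refine CStarAlgebra.norm_le_norm_of_nonneg_of_le (hpos Z) ?_
    rw [ContinuousLinearMap.le_def, ContinuousLinearMap.isPositive_iff_complex]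
    intro ξ
    rw [ContinuousLinearMap.sub_apply, inner_sub_left, hq, hq, ← Complex.ofReal_sub]
    refine ⟨by simp, ?_⟩
    simp only [RCLike.re_to_complex, Complex.ofReal_re, sub_nonneg]
    exact Summable.tsum_le_tsum (fun g => h _ _) (hs4_col _ _) (hs4_col _ _)
  intro X hX K
  set T := X - ∑ g ∈ K, L g * π (star (L g) * X) with hT
  have hTs : ∀ g v, T (lp.single 2 g v) = X (lp.single 2 g v) - ∑ k ∈ K,
      lp.single 2 (k * g) ((X (lp.single 2 g v) : ∀ _ : G, H) (k * g)) := by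
    intro g v
    rw [hT, ContinuousLinearMap.sub_apply, ContinuousLinearMap.sum_apply]
    congr 1
    exact Finset.sum_congr rfl fun k _ => hcs X k g v
  have key : π (star T * T) = π (star X * X)
      - ∑ g ∈ K, star (π (star (L g) * X)) * π (star (L g) * X) := by
    apply ContinuousLinearMap.coe_injective
    rw [← ext_inner_map]
    intro ξ
    simp only [ContinuousLinearMap.coe_coe]
    have e : ∀ k, ⟪(star (π (star (L k) * X)) * π (star (L k) * X)) ξ, ξ⟫_ℂ =
        ((‖π (star (L k) * X) ξ‖ ^ 2 : ℝ) : ℂ) := by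
      intro k
      rw [ContinuousLinearMap.mul_apply, ContinuousLinearMap.star_eq_adjoint (π _),
        ContinuousLinearMap.adjoint_inner_left, inner_self_eq_norm_sq_to_K]
      simp
    rw [ContinuousLinearMap.sub_apply, ContinuousLinearMap.sum_apply, inner_sub_left, sum_inner,
      hq, hq, Finset.sum_congr rfl fun k _ => e k, ← Complex.ofReal_sum, ← Complex.ofReal_sub]
    congr 1
    have h1 := (hs4_col X ξ).hasSum.sub (hasSum_sum (s := K) fun k _ =>
      hs4_hasSum_sq (π (star (L k) * X) ξ))
    rw [← h1.tsum_eq]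
    congr 1; ext g
    rw [hTs, hs4_sub_sum_sq]
    simp only [hc]
  rw [← key]
  refine ⟨rfl, ?_⟩
  -- coefficients lie in the range of Ψ
  have hP : ∀ k, ∃ A : 𝒜, ∀ g v, (X (lp.single 2 g v) : ∀ _ : G, H) (k * g) =
      ((α g⁻¹ A : 𝒜) : H →L[ℂ] H) v := by
    let S : Submodule ℂ (l2 G H →L[ℂ] l2 G H) :=
      Submodule.span ℂ {Z | ∃ k, ∃ A : 𝒜, Z = L k * Ψ A}
    have hL1 : L 1 = 1 := by
      ext ξ h; simp [hL]
    have hΨ1 : Ψ 1 = 1 := by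
      ext ξ h; simp [hΨ]
    have hmulg : ∀ g A h B, L g * Ψ A * (L h * Ψ B) = L (g * h) * Ψ (α h⁻¹ A * B) := by
      intro g A h B
      ext ξ x
      simp only [ContinuousLinearMap.mul_apply, hL, hΨ, map_mul, mul_inv_rev, MulMemClass.coe_mul,
        ← hαmul, inv_inv, mul_assoc, mul_inv_cancel, mul_one]
    have hstarg : ∀ g A, star (L g * Ψ A) = L g⁻¹ * Ψ (α g (star A)) := by
      intro g A
      rw [star_mul, hLs, hΨs]
      ext ξ x
      simp only [ContinuousLinearMap.mul_apply, hL, hΨ, mul_inv_rev, 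
        ← hαmul, inv_inv, mul_assoc, inv_mul_cancel, mul_one]
    have hSadj : ∀ Z ∈ StarAlgebra.adjoin ℂ (Set.range Ψ ∪ Set.range L), Z ∈ S := by
      intro Z hZ
      induction hZ using StarAlgebra.adjoin_induction with
      | mem x hx =>
        apply Submodule.subset_span
        rcases hx with ⟨A, rfl⟩ | ⟨g, rfl⟩
        · exact ⟨1, A, by rw [hL1, one_mul]⟩
        · exact ⟨g, 1, by rw [hΨ1, mul_one]⟩
      | algebraMap r =>
        rw [Algebra.algebraMap_eq_smul_one]
        exact S.smul_mem _ (Submodule.subset_span ⟨1, 1, by rw [hL1, hΨ1, one_mul]⟩)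
      | add x y _ _ hx hy => exact S.add_mem hx hy
      | mul x y _ _ hx hy =>
        have := Submodule.mul_mem_mul hx hy
        rw [Submodule.span_mul_span] at this
        refine Submodule.span_mono ?_ this
        rintro _ ⟨_, ⟨g, A, rfl⟩, _, ⟨h, B, rfl⟩, rfl⟩
        exact ⟨_, _, hmulg g A h B⟩
      | star x hx' hx =>
        clear hx'
        induction hx using Submodule.span_induction with
        | mem x hx =>
          obtain ⟨g, A, rfl⟩ := hx
          exact Submodule.subset_span ⟨_, _, hstarg g A⟩
        | zero => simp
        | add x y _ _ hx hy => rw [star_add]; exact S.add_mem hx hy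
        | smul a x _ hx => rw [star_smul]; exact S.smul_mem _ hx
    have hSP : ∀ Z ∈ S, ∀ k, ∃ A : 𝒜, ∀ g v, (Z (lp.single 2 g v) : ∀ _ : G, H) (k * g) =
        ((α g⁻¹ A : 𝒜) : H →L[ℂ] H) v := by
      intro Z hZ k
      induction hZ using Submodule.span_induction with
      | mem x hx =>
        obtain ⟨h, A, rfl⟩ := hx
        by_cases hk : h = k
        · subst hk
          refine ⟨A, fun g v => ?_⟩
          rw [ContinuousLinearMap.mul_apply, hL, hΨ]
          simp
        · refine ⟨0, fun g v => ?_⟩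
          rw [ContinuousLinearMap.mul_apply, hL, hΨ, lp.single_apply_ne]
          · simp
          · rw [← mul_assoc, Ne, mul_eq_right, inv_mul_eq_one]; exact hk
      | zero => exact ⟨0, fun g v => by simp⟩
      | add x y _ _ hx hy =>
        obtain ⟨A, hA⟩ := hx
        obtain ⟨B, hB⟩ := hy
        refine ⟨A + B, fun g v => ?_⟩
        rw [ContinuousLinearMap.add_apply, lp.coeFn_add, Pi.add_apply, hA, hB]
        simp
      | smul a x _ hx =>
        obtain ⟨A, hA⟩ := hx
        refine ⟨a • A, fun g v => ?_⟩
        rw [ContinuousLinearMap.smul_apply, lp.coeFn_smul, Pi.smul_apply, hA]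
        simp
    intro k
    rw [h𝒞, SetLike.mem_coe, ← SetLike.mem_coe, StarSubalgebra.topologicalClosure_coe,
      mem_closure_iff_seq_limit] at hX
    obtain ⟨x, hx, hlim⟩ := hX
    choose A hA using fun n => hSP (x n) (hSadj _ (hx n)) k
    let Φ : (l2 G H →L[ℂ] l2 G H) → (H →L[ℂ] H) := fun Z =>
      (lp.evalCLM ℂ (fun _ : G => H) 2 k).comp (Z.comp (lp.singleContinuousLinearMap ℂ (fun _ : G => H) 2 1))
    have hΦ : Continuous Φ := by fun_prop
    have hΦA : ∀ n, Φ (x n) = A n := by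
      intro n
      ext v
      have := hA n 1 v
      rw [mul_one, inv_one, hα1] at this
      exact this
    have hlimA : Filter.Tendsto (fun n => (A n : H →L[ℂ] H)) Filter.atTop (nhds (Φ X)) := by
      simp only [← hΦA]
      exact (hΦ.tendsto X).comp hlim
    have hmem : Φ X ∈ 𝒜 := h𝒜.mem_of_tendsto hlimA (Filter.Eventually.of_forall fun n => (A n).2)
    have hlimA' : Filter.Tendsto A Filter.atTop (nhds (⟨Φ X, hmem⟩ : 𝒜)) :=
      tendsto_subtype_rng.2 hlimA
    refine ⟨⟨Φ X, hmem⟩, fun g v => ?_⟩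
    have hαc : Continuous (α g⁻¹) := by
      haveI := h𝒜
      exact (StarAlgEquiv.isometry (α g⁻¹)).continuous
    have t1 : Filter.Tendsto (fun n => ((α g⁻¹ (A n) : 𝒜) : H →L[ℂ] H) v) Filter.atTop
        (nhds (((α g⁻¹ ⟨Φ X, hmem⟩ : 𝒜) : H →L[ℂ] H) v)) := by
      have c : Continuous fun B : 𝒜 => ((α g⁻¹ B : 𝒜) : H →L[ℂ] H) v :=
        (ContinuousLinearMap.apply ℂ H v).continuous.comp (continuous_subtype_val.comp hαc)
      exact (c.tendsto _).comp hlimA'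
    have t2 : Filter.Tendsto (fun n => (x n (lp.single 2 g v) : ∀ _ : G, H) (k * g)) Filter.atTop
        (nhds ((X (lp.single 2 g v) : ∀ _ : G, H) (k * g))) := by
      have c : Continuous fun Z : l2 G H →L[ℂ] l2 G H =>
          lp.evalCLM ℂ (fun _ : G => H) 2 (k * g) (Z (lp.single 2 g v)) := by fun_prop
      exact (c.tendsto _).comp hlim
    simp only [hA] at t2
    exact tendsto_nhds_unique t2 t1
  have hYs : ∀ Y ∈ Submodule.span ℂ {Z : l2 G H →L[ℂ] l2 G H | ∃ k ∈ K, ∃ A : 𝒜, Z = L k * Ψ A},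
      ∀ g v h, (∀ k ∈ K, h ≠ k * g) → (Y (lp.single 2 g v) : ∀ _ : G, H) h = 0 := by
    intro Y hY g v h hh
    induction hY using Submodule.span_induction with
    | mem x hx =>
      obtain ⟨k, hk, A, rfl⟩ := hx
      rw [ContinuousLinearMap.mul_apply, hL, hΨ, lp.single_apply_ne]
      · simp
      · intro h'
        exact hh k hk (by rw [← h']; simp)
    | zero => simp
    | add x y _ _ hx hy =>
      rw [ContinuousLinearMap.add_apply, lp.coeFn_add, Pi.add_apply, hx, hy, add_zero]
    | smul a x _ hx =>
      rw [ContinuousLinearMap.smul_apply, lp.coeFn_smul, Pi.smul_apply, hx, smul_zero]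
  symm
  apply IsLeast.csInf_eq
  constructor
  · refine ⟨∑ g ∈ K, L g * π (star (L g) * X), ?_, rfl⟩
    refine Submodule.sum_mem _ fun k hk => Submodule.subset_span ?_
    obtain ⟨A, hA⟩ := hP k
    refine ⟨k, hk, A, ?_⟩
    congr 1
    ext ξ g
    rw [hc, hA, hΨ]
  · rintro _ ⟨Y, hY, rfl⟩
    apply Real.sqrt_le_sqrt
    apply hmono
    intro g v
    rw [hTs, ContinuousLinearMap.sub_apply]
    exact hs4_le _ _ K g (hYs Y hY g v)
end
end
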